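/- arXiv:2407.20187 — 9 statements merged into one kernel-verified Lean document; each statement's English description precedes it below -/
import Mathlib

section
/- Let G = (V, E) be a two-coloured graph and let E' be an optimal MIAE solution. Then no edge of E' \ E joins two red nodes. -/
open Finset

variable {V : Type*}

/-- Number of blue neighbours of `v` in the graph on `V` with edge set `E'`. -/
def blueDeg [Fintype V] [DecidableEq V] (f : V → Bool) (E' : Finset (Sym2 V)) (v : V) : ℕ :=
  (Finset.univ.filter (fun u => u ≠ v ∧ s(u, v) ∈ E' ∧ f u = true)).card

/-- Number of red neighbours of `v` in the graph on `V` with edge set `E'`. -/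
def redDeg [Fintype V] [DecidableEq V] (f : V → Bool) (E' : Finset (Sym2 V)) (v : V) : ℕ :=
  (Finset.univ.filter (fun u => u ≠ v ∧ s(u, v) ∈ E' ∧ f u = false)).card

/-- No node is under majority illusion in `(V, E')`. -/
def NoIllusion [Fintype V] [DecidableEq V] (f : V → Bool) (E' : Finset (Sym2 V)) : Prop :=
  ∀ v : V, redDeg f E' v ≤ blueDeg f E' v

/-- An edge set of a simple graph contains no loops. -/
def Loopless (E' : Finset (Sym2 V)) : Prop := ∀ e ∈ E', ¬ e.IsDiag

/-- Feasible MIAE solution: a loopless edge set extending `E` under which no node is under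
illusion. Optimal solutions minimize `(D \ E).card` among these and are in particular `Minimal` for
inclusion. -/
def IsMIAESolution [Fintype V] [DecidableEq V] (f : V → Bool) (E D : Finset (Sym2 V)) : Prop :=
  E ⊆ D ∧ Loopless D ∧ NoIllusion f D

theorem Loopless.subset {D D' : Finset (Sym2 V)} (hD' : Loopless D') (h : D ⊆ D') : Loopless D :=
  fun e he ↦ hD' e (h he)

theorem minimal_of_forall_card_sdiff_le {α : Type*} [DecidableEq α] {P : Finset α → Prop}
    {s t : Finset α} (hs : ∀ r, P r → s ⊆ r) (ht : P t)
    (hcard : ∀ r, P r → (t \ s).card ≤ (r \ s).card) : Minimal P t := by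
  refine ⟨ht, fun r hr hrt ↦ ?_⟩
  have hdiff : r \ s = t \ s :=
    eq_of_subset_of_card_le (sdiff_subset_sdiff hrt subset_rfl) (hcard r hr)
  have htr : t = r :=
    calc
      t = t \ s ∪ s := (sdiff_union_of_subset (hs t ht)).symm
      _ = r \ s ∪ s := by rw [hdiff]
      _ = r := sdiff_union_of_subset (hs r hr)
  exact htr.le

section Coloring

variable [Fintype V] [DecidableEq V] {f : V → Bool}

theorem redDeg_mono {D D' : Finset (Sym2 V)} (h : D ⊆ D') (v : V) :
    redDeg f D v ≤ redDeg f D' v :=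
  card_le_card <| monotone_filter_right _ fun _ _ ⟨hne, hmem, hred⟩ ↦ ⟨hne, h hmem, hred⟩

theorem blueDeg_sdiff_of_forall_red (D : Finset (Sym2 V)) {S : Finset (Sym2 V)}
    (hS : ∀ e ∈ S, ∀ w ∈ e, f w = false) (v : V) : blueDeg f (D \ S) v = blueDeg f D v := by
  have notMem_of_blue {u : V} (hu : f u = true) : s(u, v) ∉ S := fun hmem ↦
    Bool.false_ne_true <| (hS _ hmem u (Sym2.mem_mk_left u v)).symm.trans hu
  refine congrArg card <| filter_congr fun u _ ↦ ?_
  rw [mem_sdiff]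
  exact ⟨fun ⟨hne, hmem, hu⟩ ↦ ⟨hne, hmem.1, hu⟩,
    fun ⟨hne, hmem, hu⟩ ↦ ⟨hne, ⟨hmem, notMem_of_blue hu⟩, hu⟩⟩

theorem NoIllusion.sdiff_of_forall_red {D S : Finset (Sym2 V)} (hD : NoIllusion f D)
    (hS : ∀ e ∈ S, ∀ w ∈ e, f w = false) : NoIllusion f (D \ S) := fun v ↦
  calc
    redDeg f (D \ S) v ≤ redDeg f D v := redDeg_mono sdiff_subset v
    _ ≤ blueDeg f D v := hD v
    _ = blueDeg f (D \ S) v := (blueDeg_sdiff_of_forall_red D hS v).symm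

theorem IsMIAESolution.sdiff_of_forall_red {E D S : Finset (Sym2 V)} (hD : IsMIAESolution f E D)
    (hES : Disjoint E S) (hS : ∀ e ∈ S, ∀ w ∈ e, f w = false) : IsMIAESolution f E (D \ S) :=
  let ⟨hsub, hloop, hfeas⟩ := hD
  ⟨subset_sdiff.2 ⟨hsub, hES⟩, hloop.subset sdiff_subset, hfeas.sdiff_of_forall_red hS⟩

end Coloring

theorem stmt1_general [Fintype V] [DecidableEq V] {f : V → Bool} {E E' : Finset (Sym2 V)}
    (hmin : Minimal (IsMIAESolution f E) E') :
    ∀ u v : V, s(u, v) ∈ E' \ E → ¬ (f u = false ∧ f v = false) := by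
  rintro u v huv ⟨hu, hv⟩
  obtain ⟨hmem, hnotMem⟩ := mem_sdiff.1 huv
  have hred : ∀ e ∈ ({s(u, v)} : Finset (Sym2 V)), ∀ w ∈ e, f w = false := by
    simp [hu, hv]
  have hsol : IsMIAESolution f E (E' \ {s(u, v)}) :=
    hmin.prop.sdiff_of_forall_red (disjoint_singleton_right.2 hnotMem) hred
  have hle : E' ⊆ E' \ {s(u, v)} := hmin.le_of_le hsol sdiff_subset
  exact (mem_sdiff.1 (hle hmem)).2 (mem_singleton_self _)

/-- In an optimal MIAE solution, no added edge joins two red nodes. -/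
theorem stmt1 [Fintype V] [DecidableEq V] (f : V → Bool) (E E' : Finset (Sym2 V))
    (hE : Loopless E)
    (hsub : E ⊆ E') (hloop : Loopless E') (hfeas : NoIllusion f E')
    (hopt : ∀ E'' : Finset (Sym2 V), E ⊆ E'' → Loopless E'' → NoIllusion f E'' →
      (E' \ E).card ≤ (E'' \ E).card) :
    ∀ u v : V, s(u, v) ∈ E' \ E → ¬ (f u = false ∧ f v = false) :=
  stmt1_general <| minimal_of_forall_card_sdiff_le (fun _ hD ↦ hD.1) ⟨hsub, hloop, hfeas⟩
    fun D ⟨hsubD, hloopD, hfeasD⟩ ↦ hopt D hsubD hloopD hfeasD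
end

section
/- Let G = (V, E) be a two-coloured graph and let E' be an optimal MIRE solution. Then no edge of E \ E' joins two blue nodes. -/
open Finset

variable {V : Type*}

theorem maximal_of_forall_card_sdiff_le {α : Type*} [DecidableEq α] {P : Finset α → Prop}
    {s t : Finset α} (hts : t ⊆ s) (ht : P t)
    (hmin : ∀ u : Finset α, u ⊆ s → P u → #(s \ t) ≤ #(s \ u)) :
    Maximal (fun u ↦ u ⊆ s ∧ P u) t := by
  refine ⟨⟨hts, ht⟩, fun u ⟨hus, hu⟩ htu ↦ ?_⟩
  have hsdiff : s \ u = s \ t :=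
    eq_of_subset_of_card_le (sdiff_subset_sdiff Subset.rfl htu) (hmin u hus hu)
  exact (sdiff_le_sdiff_iff_le hts hus).mp hsdiff.ge

section MajorityIllusion

variable [Fintype V] [DecidableEq V] {f : V → Bool} {E E' : Finset (Sym2 V)} {e : Sym2 V}

theorem blueDeg_mono (f : V → Bool) (v : V) : Monotone fun F ↦ blueDeg f F v :=
  fun _ _ hF ↦ card_le_card <| monotone_filter_right _ fun _ _ ⟨hne, hmem, hblue⟩ ↦
    ⟨hne, hF hmem, hblue⟩

theorem redDeg_insert_of_forall_blue (he : ∀ x ∈ e, f x = true) (F : Finset (Sym2 V)) (v : V) :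
    redDeg f (insert e F) v = redDeg f F v := by
  have hne {u : V} (hu : f u = false) : s(u, v) ≠ e := by
    rintro rfl
    simp [he u (Sym2.mem_mk_left u v)] at hu
  exact congrArg card <| filter_congr fun u _ ↦ and_congr_right fun _ ↦
    and_congr_left fun hu ↦ mem_insert.trans (or_iff_right (hne hu))

theorem NoIllusion.insert_of_forall_blue (hE : NoIllusion f E) (he : ∀ x ∈ e, f x = true) :
    NoIllusion f (insert e E) := fun v ↦
  calc
    redDeg f (insert e E) v = redDeg f E v := redDeg_insert_of_forall_blue he E v
    _ ≤ blueDeg f E v := hE v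
    _ ≤ blueDeg f (insert e E) v := blueDeg_mono f v (subset_insert e E)

theorem stmt3_general (hmax : Maximal (fun F ↦ F ⊆ E ∧ NoIllusion f F) E') :
    ∀ u v : V, s(u, v) ∈ E \ E' → ¬ (f u = true ∧ f v = true) := by
  intro u v huv hblue
  obtain ⟨huvE, huvE'⟩ := mem_sdiff.mp huv
  obtain ⟨hsub, hfeas⟩ := hmax.prop
  have hfeas' : NoIllusion f (insert s(u, v) E') :=
    hfeas.insert_of_forall_blue (Sym2.ball.mpr hblue)
  have hle : insert s(u, v) E' ⊆ E' :=
    hmax.le_of_ge ⟨insert_subset huvE hsub, hfeas'⟩ (subset_insert _ _)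
  exact huvE' (hle (mem_insert_self _ _))

end MajorityIllusion

/-- In an optimal MIRE solution, no removed edge joins two blue nodes. -/
theorem stmt3 [Fintype V] [DecidableEq V] (f : V → Bool) (E E' : Finset (Sym2 V))
    (hE : Loopless E)
    (hsub : E' ⊆ E) (hfeas : NoIllusion f E')
    (hopt : ∀ E'' : Finset (Sym2 V), E'' ⊆ E → NoIllusion f E'' →
      (E \ E').card ≤ (E \ E'').card) :
    ∀ u v : V, s(u, v) ∈ E \ E' → ¬ (f u = true ∧ f v = true) := by
  exact stmt3_general (maximal_of_forall_card_sdiff_le hsub hfeas hopt)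
end

section
/- Let G = (V, E) be a two-coloured graph and let E' be any feasible MIAE solution. Then for every red node v, the number of edges of E' \ E incident to v is at least max(r(v) - b(v), 0), where b(v) and r(v) are the numbers of blue and red neighbours of v in (V, E). -/
open Finset

variable {V : Type*}

section

variable [Fintype V] [DecidableEq V] {f : V → Bool} {E E' : Finset (Sym2 V)} {v : V}

theorem redDeg_mono_s5 (h : E ⊆ E') : redDeg f E v ≤ redDeg f E' v :=
  card_le_card <| monotone_filter_right _ fun _ _ ⟨hne, he, hred⟩ => ⟨hne, h he, hred⟩

theorem blueDeg_le_blueDeg_add_blueDeg_sdiff :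
    blueDeg f E' v ≤ blueDeg f E v + blueDeg f (E' \ E) v := by
  unfold blueDeg
  refine (card_le_card fun u hu => ?_).trans (card_union_le _ _)
  simp only [mem_union, mem_filter, mem_univ, true_and, mem_sdiff] at hu ⊢
  tauto

theorem blueDeg_le_card_incident : blueDeg f E v ≤ (E.filter (fun e => v ∈ e)).card := by
  refine card_le_card_of_injOn (fun u => s(u, v)) (fun u hu => ?_)
    (fun _ _ _ _ h => Sym2.congr_left.mp h)
  obtain ⟨-, -, he, -⟩ := mem_filter.mp hu
  exact mem_filter.mpr ⟨he, Sym2.mem_mk_right u v⟩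

theorem stmt5_general (hsub : E ⊆ E') (hv : redDeg f E' v ≤ blueDeg f E' v) :
    redDeg f E v - blueDeg f E v ≤ ((E' \ E).filter (fun e => v ∈ e)).card := by
  rw [tsub_le_iff_left]
  calc redDeg f E v
    _ ≤ redDeg f E' v := redDeg_mono_s5 hsub
    _ ≤ blueDeg f E' v := hv
    _ ≤ blueDeg f E v + blueDeg f (E' \ E) v := blueDeg_le_blueDeg_add_blueDeg_sdiff
    _ ≤ blueDeg f E v + ((E' \ E).filter (fun e => v ∈ e)).card := by
      gcongr
      exact blueDeg_le_card_incident

end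

/-- In any feasible MIAE solution, every red node `v` is incident to at least
`max(r(v) - b(v), 0)` added edges (here `max(r-b,0)` is the truncated subtraction `r - b` in ℕ). -/
theorem stmt5 [Fintype V] [DecidableEq V] (f : V → Bool) (E E' : Finset (Sym2 V))
    (hE : Loopless E)
    (hsub : E ⊆ E') (hloop : Loopless E') (hfeas : NoIllusion f E') :
    ∀ v : V, f v = false →
      redDeg f E v - blueDeg f E v ≤ ((E' \ E).filter (fun e => v ∈ e)).card :=
  fun v _ => stmt5_general hsub (hfeas v)
end

section
/- Let G = (V, E) be a two-coloured graph and let E' be an optimal MIAE solution. Then for every red node v, the number of edges of E' \ E incident to v is exactly max(r(v) - b(v), 0), where b(v) and r(v) are the numbers of blue and red neighbours of v in (V, E). -/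
open Finset

variable {V : Type*}

/-!
By optimality, deleting any added edge creates an illusion. Degrees are additive in the edge set, so
the deletion can do so only at an end of the edge whose other end is blue, and only if that end has
as many red as blue neighbours in `E'`. Hence all added edges at a red node `v` lead to blue nodes:
they leave `r(v)` unchanged and, if there are any, raise `b(v)` exactly to `r(v)`.
-/

theorem Loopless.mono {E F : Finset (Sym2 V)} (hF : Loopless F) (h : E ⊆ F) : Loopless E :=
  fun e he ↦ hF e (h he)

section

variable [Fintype V] [DecidableEq V]

/-- The number of neighbours of `v` of colour `c` in the graph on `V` with edge set `F`. Its
instances `c = true` and `c = false` are definitionally `blueDeg` and `redDeg`, so that facts common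
to both are proved once. -/
def colourDeg (f : V → Bool) (c : Bool) (F : Finset (Sym2 V)) (v : V) : ℕ :=
  #{u | u ≠ v ∧ s(u, v) ∈ F ∧ f u = c}

theorem colourDeg_pos_iff {f : V → Bool} {c : Bool} {F : Finset (Sym2 V)} {v : V} :
    0 < colourDeg f c F v ↔ ∃ u ≠ v, s(u, v) ∈ F ∧ f u = c := by
  simp [colourDeg, card_pos, Finset.Nonempty]

theorem colourDeg_add_colourDeg_sdiff (f : V → Bool) (c : Bool) {E F : Finset (Sym2 V)}
    (h : E ⊆ F) (v : V) :
    colourDeg f c E v + colourDeg f c (F \ E) v = colourDeg f c F v := by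
  unfold colourDeg
  rw [← card_union_of_disjoint]
  · congr 1
    ext u
    have := @h s(u, v)
    simp only [mem_union, mem_filter_univ, mem_sdiff]
    tauto
  · rw [disjoint_filter]
    rintro u - ⟨-, hE, -⟩ ⟨-, hFE, -⟩
    exact (mem_sdiff.1 hFE).2 hE

theorem colourDeg_singleton_add_colourDeg_erase (f : V → Bool) (c : Bool) {F : Finset (Sym2 V)}
    {e : Sym2 V} (he : e ∈ F) (v : V) :
    colourDeg f c {e} v + colourDeg f c (F.erase e) v = colourDeg f c F v := by
  rw [erase_eq, colourDeg_add_colourDeg_sdiff f c (singleton_subset_iff.2 he)]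

theorem colourDeg_singleton_le_one (f : V → Bool) (c : Bool) (e : Sym2 V) (v : V) :
    colourDeg f c {e} v ≤ 1 := by
  refine card_le_one.2 fun u hu w hw ↦ ?_
  simp only [mem_filter_univ, mem_singleton] at hu hw
  exact Sym2.congr_left.1 (hu.2.1.trans hw.2.1.symm)

theorem card_filter_mem_eq_card_filter_mk_mem (D : Finset (Sym2 V)) (v : V) :
    #{e ∈ D | v ∈ e} = #{u | s(u, v) ∈ D} := by
  have himage : {e ∈ D | v ∈ e} = image (fun u ↦ s(u, v)) {u | s(u, v) ∈ D} := by
    ext e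
    simp only [mem_filter, mem_image, mem_univ, true_and]
    constructor
    · rintro ⟨he, u, rfl⟩
      exact ⟨u, Sym2.eq_swap ▸ he, Sym2.eq_swap⟩
    · rintro ⟨u, hu, rfl⟩
      exact ⟨hu, Sym2.mem_mk_right u v⟩
  rw [himage, card_image_of_injective _ fun _ _ ↦ Sym2.congr_left.1]

theorem card_filter_mem_eq_blueDeg_add_redDeg (f : V → Bool) {D : Finset (Sym2 V)} {v : V}
    (hv : s(v, v) ∉ D) :
    #{e ∈ D | v ∈ e} = blueDeg f D v + redDeg f D v := by
  have hne (u : V) (hu : s(u, v) ∈ D) : u ≠ v := by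
    rintro rfl
    exact hv hu
  rw [card_filter_mem_eq_card_filter_mk_mem,
    ← card_filter_add_card_filter_not (fun u ↦ f u = true), filter_filter, filter_filter]
  unfold blueDeg redDeg
  congr 2 <;> grind

theorem exists_blue_and_redDeg_eq_blueDeg_of_not_noIllusion_erase {f : V → Bool}
    {F : Finset (Sym2 V)} {e : Sym2 V} (hF : NoIllusion f F)
    (hcrit : ¬ NoIllusion f (F.erase e)) :
    ∃ u w, e = s(u, w) ∧ f u = true ∧ redDeg f F w = blueDeg f F w := by
  have he : e ∈ F := by
    by_contra he
    exact hcrit (by rwa [erase_eq_of_notMem he])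
  obtain ⟨w, hw⟩ : ∃ w, blueDeg f (F.erase e) w < redDeg f (F.erase e) w := by
    simpa only [NoIllusion, not_forall, not_le] using hcrit
  have hFw : redDeg f F w ≤ blueDeg f F w := hF w
  have hblue : colourDeg f true {e} w + blueDeg f (F.erase e) w = blueDeg f F w :=
    colourDeg_singleton_add_colourDeg_erase f true he w
  have hred : colourDeg f false {e} w + redDeg f (F.erase e) w = redDeg f F w :=
    colourDeg_singleton_add_colourDeg_erase f false he w
  have hle : colourDeg f true {e} w ≤ 1 := colourDeg_singleton_le_one f true e w
  have hpos : 0 < colourDeg f true {e} w := by omega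
  obtain ⟨u, -, hue, hu⟩ := colourDeg_pos_iff.1 hpos
  exact ⟨u, w, (mem_singleton.1 hue).symm, hu, by omega⟩

theorem blue_and_redDeg_eq_blueDeg_of_not_noIllusion_erase {f : V → Bool}
    {F : Finset (Sym2 V)} {u v : V} (hF : NoIllusion f F) (hv : f v = false)
    (hcrit : ¬ NoIllusion f (F.erase s(u, v))) :
    f u = true ∧ redDeg f F v = blueDeg f F v := by
  obtain ⟨a, b, hab, ha, htight⟩ :=
    exists_blue_and_redDeg_eq_blueDeg_of_not_noIllusion_erase hF hcrit
  obtain ⟨rfl, rfl⟩ | ⟨rfl, rfl⟩ := Sym2.eq_iff.1 hab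
  · exact ⟨ha, htight⟩
  · exact absurd ha (by simp [hv])

theorem not_noIllusion_erase_of_optimal {f : V → Bool} {E E' : Finset (Sym2 V)} {e : Sym2 V}
    (hsub : E ⊆ E') (hloop : Loopless E')
    (hopt : ∀ E'' : Finset (Sym2 V), E ⊆ E'' → Loopless E'' → NoIllusion f E'' →
      #(E' \ E) ≤ #(E'' \ E))
    (he : e ∈ E' \ E) : ¬ NoIllusion f (E'.erase e) := by
  intro hfeas
  have hle : #(E' \ E) ≤ #(E'.erase e \ E) :=
    hopt _ (subset_erase.2 ⟨hsub, (mem_sdiff.1 he).2⟩) (hloop.mono (erase_subset e E')) hfeas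
  rw [erase_sdiff_comm] at hle
  exact (card_erase_lt_of_mem he).not_ge hle

end

theorem stmt6_general [Fintype V] [DecidableEq V] {f : V → Bool} {E E' : Finset (Sym2 V)} {v : V}
    (hsub : E ⊆ E') (hfeas : NoIllusion f E') (hv : f v = false)
    (hcrit : ∀ u, s(u, v) ∈ E' \ E → ¬ NoIllusion f (E'.erase s(u, v))) :
    #{e ∈ E' \ E | v ∈ e} = redDeg f E v - blueDeg f E v := by
  have hadded (u : V) (hu : s(u, v) ∈ E' \ E) :
      f u = true ∧ redDeg f E' v = blueDeg f E' v :=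
    blue_and_redDeg_eq_blueDeg_of_not_noIllusion_erase hfeas hv (hcrit u hu)
  have hloop : s(v, v) ∉ E' \ E := fun h ↦ by simpa [hv] using (hadded v h).1
  have hred_zero : redDeg f (E' \ E) v = 0 := by
    by_contra hne
    obtain ⟨u, -, hu, hured⟩ := colourDeg_pos_iff.1 (Nat.pos_of_ne_zero hne)
    simpa [hured] using (hadded u hu).1
  have hblue : blueDeg f E v + blueDeg f (E' \ E) v = blueDeg f E' v :=
    colourDeg_add_colourDeg_sdiff f true hsub v
  have hred : redDeg f E v + redDeg f (E' \ E) v = redDeg f E' v :=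
    colourDeg_add_colourDeg_sdiff f false hsub v
  rw [card_filter_mem_eq_blueDeg_add_redDeg f hloop, hred_zero, add_zero]
  rcases (blueDeg f (E' \ E) v).eq_zero_or_pos with hzero | hpos
  · have hle : redDeg f E' v ≤ blueDeg f E' v := hfeas v
    omega
  · obtain ⟨u, -, hu, -⟩ := colourDeg_pos_iff.1 hpos
    have htight : redDeg f E' v = blueDeg f E' v := (hadded u hu).2
    omega

/-- In an optimal MIAE solution, every red node `v` is incident to exactly
`max(r(v) - b(v), 0)` added edges (here `max(r-b,0)` is the truncated subtraction `r - b` in ℕ). -/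
theorem stmt6 [Fintype V] [DecidableEq V] (f : V → Bool) (E E' : Finset (Sym2 V))
    (hE : Loopless E)
    (hsub : E ⊆ E') (hloop : Loopless E') (hfeas : NoIllusion f E')
    (hopt : ∀ E'' : Finset (Sym2 V), E ⊆ E'' → Loopless E'' → NoIllusion f E'' →
      (E' \ E).card ≤ (E'' \ E).card) :
    ∀ v : V, f v = false →
      ((E' \ E).filter (fun e => v ∈ e)).card = redDeg f E v - blueDeg f E v :=
  fun _ hv ↦ stmt6_general hsub hfeas hv fun _ hu ↦
    not_noIllusion_erase_of_optimal hsub hloop hopt hu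
end

section
/- Let G = (V, E) be a two-coloured graph and let E' be any feasible MIRE solution. Then for every blue node v, the number of edges of E \ E' incident to v is at least max(r(v) - b(v), 0), where b(v) and r(v) are the numbers of blue and red neighbours of v in (V, E). -/
open Finset

variable {V : Type*}

section

variable [Fintype V] [DecidableEq V] (f : V → Bool)

theorem blueDeg_mono_s7 {E' E : Finset (Sym2 V)} (hsub : E' ⊆ E) (v : V) :
    blueDeg f E' v ≤ blueDeg f E v :=
  card_le_card <| monotone_filter_right univ fun _ _ ⟨hne, hmem, hblue⟩ =>
    ⟨hne, hsub hmem, hblue⟩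

theorem redDeg_le_redDeg_add_redDeg_sdiff (E E' : Finset (Sym2 V)) (v : V) :
    redDeg f E v ≤ redDeg f E' v + redDeg f (E \ E') v := by
  refine (card_le_card fun u hu => ?_).trans (card_union_le _ _)
  simp only [mem_union, mem_filter, mem_univ, true_and, mem_sdiff] at hu ⊢
  tauto

theorem redDeg_le_card_filter_mem (E : Finset (Sym2 V)) (v : V) :
    redDeg f E v ≤ (E.filter (fun e => v ∈ e)).card := by
  refine card_le_card_of_injOn (fun u => s(u, v)) (fun u hu => ?_)
    fun _ _ _ _ h => Sym2.congr_left.mp h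
  obtain ⟨-, -, hmem, -⟩ := mem_filter.mp hu
  exact mem_filter.mpr ⟨hmem, Sym2.mem_mk_right u v⟩

theorem stmt7_general {E E' : Finset (Sym2 V)} (hsub : E' ⊆ E) {v : V}
    (hv : redDeg f E' v ≤ blueDeg f E' v) :
    redDeg f E v - blueDeg f E v ≤ ((E \ E').filter (fun e => v ∈ e)).card := by
  rw [Nat.sub_le_iff_le_add']
  calc redDeg f E v
      ≤ redDeg f E' v + redDeg f (E \ E') v := redDeg_le_redDeg_add_redDeg_sdiff f E E' v
    _ ≤ blueDeg f E v + ((E \ E').filter (fun e => v ∈ e)).card :=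
        Nat.add_le_add (hv.trans (blueDeg_mono_s7 f hsub v)) (redDeg_le_card_filter_mem f _ v)

end

/-- In any feasible MIRE solution, every blue node `v` is incident to at least
`max(r(v) - b(v), 0)` removed edges (here `max(r-b,0)` is the truncated subtraction `r - b` in ℕ). -/
theorem stmt7 [Fintype V] [DecidableEq V] (f : V → Bool) (E E' : Finset (Sym2 V))
    (hE : Loopless E)
    (hsub : E' ⊆ E) (hfeas : NoIllusion f E') :
    ∀ v : V, f v = true →
      redDeg f E v - blueDeg f E v ≤ ((E \ E').filter (fun e => v ∈ e)).card := by
  intro v _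
  exact stmt7_general f hsub (hfeas v)
end

section
/- Let G = (V, E) be a two-coloured graph and let E' be an optimal MIRE solution. Then for every blue node v, the number of edges of E \ E' incident to v is exactly max(r(v) - b(v), 0), where b(v) and r(v) are the numbers of blue and red neighbours of v in (V, E). -/
/-!
Adding back a removed edge `s(u, v)` at a blue node `v` can create an illusion only at `v`, and only
if `u` is red and `v` has no blue surplus: every other node is left alone or gains a blue neighbour.
So if no removed edge can be added back, all removed edges at `v` lead to red nodes, which leaves
`b(v)` unchanged, and if there are any then `r(v)` has dropped exactly to `b(v)`.
-/

open Finset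

variable {V : Type*}

section ColorDeg

variable {C : Type*} [Fintype V] [DecidableEq V] [DecidableEq C] {f : V → C} {c : C}
  {F F' : Finset (Sym2 V)} {e : Sym2 V} {v : V}

/-- Number of neighbours of `v` of colour `c` in the graph on `V` with edge set `F`, treating blue
and red degrees (the cases `c = true` and `c = false`) uniformly. As in `blueDeg` and `redDeg`, a
loop does not make `v` its own neighbour. -/
def colorDeg (f : V → C) (c : C) (F : Finset (Sym2 V)) (v : V) : ℕ :=
  #{u | u ≠ v ∧ s(u, v) ∈ F ∧ f u = c}

theorem blueDeg_eq_colorDeg (f : V → Bool) : blueDeg f = colorDeg f true := rfl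

theorem redDeg_eq_colorDeg (f : V → Bool) : redDeg f = colorDeg f false := rfl

theorem colorDeg_congr (h : ∀ u, f u = c → (s(u, v) ∈ F ↔ s(u, v) ∈ F')) :
    colorDeg f c F v = colorDeg f c F' v :=
  congrArg card <| filter_congr fun u _ => and_congr_right fun _ => and_congr_left (h u)

theorem colorDeg_mono (h : F ⊆ F') : colorDeg f c F v ≤ colorDeg f c F' v :=
  card_le_card <| monotone_filter_right _ fun _ _ hu => ⟨hu.1, h hu.2.1, hu.2.2⟩

theorem colorDeg_add_colorDeg_sdiff (h : F ⊆ F') :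
    colorDeg f c F v + colorDeg f c (F' \ F) v = colorDeg f c F' v := by
  unfold colorDeg
  rw [← card_union_of_disjoint (disjoint_filter.2 (by grind)), ← filter_or]
  exact congrArg card (filter_congr (by grind))

theorem colorDeg_insert_le : colorDeg f c (insert e F) v ≤ colorDeg f c F v + 1 := by
  obtain ⟨a, rfl⟩ | hfar := em (∃ a, s(a, v) = e)
  · have hnbr : univ.filter (fun u => u ≠ v ∧ s(u, v) ∈ insert s(a, v) F ∧ f u = c) ⊆
        insert a (univ.filter fun u => u ≠ v ∧ s(u, v) ∈ F ∧ f u = c) := by grind [Sym2.congr_left]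
    exact (card_le_card hnbr).trans (card_insert_le a _)
  · have hsame : colorDeg f c (insert e F) v = colorDeg f c F v :=
      colorDeg_congr fun u _ => mem_insert.trans <| or_iff_right fun hu => hfar ⟨u, hu⟩
    exact hsame.trans_le (Nat.le_succ _)

theorem exists_of_colorDeg_pos (h : 0 < colorDeg f c F v) : ∃ u, s(u, v) ∈ F ∧ f u = c := by
  obtain ⟨u, hu⟩ := card_pos.1 h
  exact ⟨u, (mem_filter.1 hu).2.2⟩

theorem card_filter_mem_eq_colorDeg (hv : f v ≠ c) (hF : ∀ u, s(u, v) ∈ F → f u = c) :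
    #{e ∈ F | v ∈ e} = colorDeg f c F v := by
  symm
  refine card_bij (fun u _ => s(u, v)) ?_ (fun _ _ _ _ => Sym2.congr_left.1) ?_
  · intro u hu
    exact mem_filter.2 ⟨(mem_filter.1 hu).2.2.1, Sym2.mem_mk_right u v⟩
  · intro e he
    obtain ⟨heF, hve⟩ := mem_filter.1 he
    obtain ⟨u, rfl⟩ := hve
    rw [Sym2.eq_swap] at heF ⊢
    have hu : f u = c := hF u heF
    exact ⟨u, mem_filter.2 ⟨mem_univ u, fun huv => hv (huv ▸ hu), heF, hu⟩, rfl⟩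

end ColorDeg

section Illusion

variable [Fintype V] [DecidableEq V] {f : V → Bool} {E E' F : Finset (Sym2 V)} {u v : V}

theorem NoIllusion.insert_edge (hF : NoIllusion f F) (hv : f v = true)
    (hu : f u = true ∨ redDeg f F v < blueDeg f F v) : NoIllusion f (insert s(u, v) F) := by
  intro x
  have hfeas : redDeg f F x ≤ blueDeg f F x := hF x
  simp only [redDeg_eq_colorDeg, blueDeg_eq_colorDeg] at hu hfeas ⊢
  have hblue : colorDeg f true F x ≤ colorDeg f true (insert s(u, v) F) x :=
    colorDeg_mono (subset_insert _ _)
  by_cases hgain : ∃ w, f w = false ∧ s(w, x) = s(u, v)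
  · obtain ⟨w, hw, heq⟩ := hgain
    obtain ⟨rfl, rfl⟩ | ⟨rfl, rfl⟩ := Sym2.eq_iff.1 heq
    · have hsurplus : colorDeg f false F x < colorDeg f true F x := hu.resolve_left (by simp [hw])
      exact colorDeg_insert_le.trans (hsurplus.trans_le hblue)
    · simp [hv] at hw
  · have hred : colorDeg f false (insert s(u, v) F) x = colorDeg f false F x :=
      colorDeg_congr fun w hw => mem_insert.trans <| or_iff_right fun heq => hgain ⟨w, hw, heq⟩
    exact hred.trans_le (hfeas.trans hblue)

theorem not_noIllusion_insert_of_card_sdiff_le {e : Sym2 V} (hsub : E' ⊆ E)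
    (hopt : ∀ E'' ⊆ E, NoIllusion f E'' → #(E \ E') ≤ #(E \ E'')) (he : e ∈ E \ E') :
    ¬ NoIllusion f (insert e E') := by
  intro hins
  have hle : #(E \ E') ≤ #(E \ insert e E') :=
    hopt _ (insert_subset (mem_sdiff.1 he).1 hsub) hins
  rw [sdiff_insert] at hle
  exact hle.not_gt (card_erase_lt_of_mem he)

theorem stmt8_general (hsub : E' ⊆ E) (hfeas : NoIllusion f E')
    (hmax : ∀ e ∈ E \ E', ¬ NoIllusion f (insert e E')) (hv : f v = true) :
    #{e ∈ E \ E' | v ∈ e} = redDeg f E v - blueDeg f E v := by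
  have hremoved_red : ∀ u, s(u, v) ∈ E \ E' → f u = false := fun u he =>
    Bool.eq_false_of_not_eq_true fun hu => hmax _ he (hfeas.insert_edge hv (.inl hu))
  have htight : 0 < redDeg f (E \ E') v → blueDeg f E' v ≤ redDeg f E' v := by
    intro hpos
    obtain ⟨u, he, -⟩ := exists_of_colorDeg_pos hpos
    exact not_lt.1 fun hsurplus => hmax _ he (hfeas.insert_edge hv (.inr hsurplus))
  have hblue : blueDeg f E' v = blueDeg f E v := by
    refine colorDeg_congr fun u hu => ⟨fun he => hsub he, fun he => ?_⟩
    by_contra he'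
    simp [hremoved_red u (mem_sdiff.2 ⟨he, he'⟩)] at hu
  have hred : redDeg f E' v + redDeg f (E \ E') v = redDeg f E v :=
    colorDeg_add_colorDeg_sdiff hsub
  have hcard : #{e ∈ E \ E' | v ∈ e} = redDeg f (E \ E') v :=
    card_filter_mem_eq_colorDeg (by simp [hv]) hremoved_red
  have hv_feas : redDeg f E' v ≤ blueDeg f E' v := hfeas v
  omega

end Illusion

/-- In an optimal MIRE solution, every blue node `v` is incident to exactly
`max(r(v) - b(v), 0)` removed edges (here `max(r-b,0)` is the truncated subtraction `r - b` in ℕ). -/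
theorem stmt8 [Fintype V] [DecidableEq V] (f : V → Bool) (E E' : Finset (Sym2 V))
    (hE : Loopless E)
    (hsub : E' ⊆ E) (hfeas : NoIllusion f E')
    (hopt : ∀ E'' : Finset (Sym2 V), E'' ⊆ E → NoIllusion f E'' →
      (E \ E').card ≤ (E \ E'').card) :
    ∀ v : V, f v = true →
      ((E \ E').filter (fun e => v ∈ e)).card = redDeg f E v - blueDeg f E v :=
  fun _ hv => stmt8_general hsub hfeas
    (fun _ he => not_noIllusion_insert_of_card_sdiff_le hsub hopt he) hv
end

section
/- Let G = (V, E) be a two-coloured graph, let E* be the set of all non-edges of G that are not between two red nodes, and for v ∈ V define b'(v) = max(r(v) - b(v), 0) if v is red, and b'(v) = (number of blue E*-neighbours of v) + b(v) - r(v) if v is blue. Let S ⊆ E* satisfy: (i) for every red node v, the number of edges of S incident to v equals b'(v); and (ii) for every blue node v, (the number of blue E*-neighbours u of v with uv ∉ S) plus (the number of red E*-neighbours u of v with uv ∈ S) is at most b'(v). Then for every subset X ⊆ V and every set F of edges of E* having exactly one endpoint in X, the following holds: (the number of edges of E* joining two blue nodes that lie in E*[X] ∪ F and are not in S) plus (the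 number of edges of E* joining a red node to a blue node that lie in E*[X] ∪ F and are in S) is at most the floor of (1/2)·(Σ_{v ∈ X} b'(v) + |F|), where E*[X] denotes the set of edges of E* with both endpoints in X. -/
open Finset

variable {V : Type*}

/-- The availability graph: all non-edges of `G` that are not between two red nodes. -/
def avail [Fintype V] [DecidableEq V] (f : V → Bool) (E : Finset (Sym2 V)) : Finset (Sym2 V) :=
  Finset.univ.filter (fun e : Sym2 V => ¬ e.IsDiag ∧ e ∉ E ∧ ¬ (∀ v ∈ e, f v = false))

/-- `b'(v)`: `max(r(v)-b(v),0)` for red `v`, and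
`#(blue E*-neighbours of v) + b(v) - r(v)` for blue `v`. -/
def bPrime [Fintype V] [DecidableEq V] (f : V → Bool) (E : Finset (Sym2 V)) (v : V) : ℤ :=
  if f v = false then max ((redDeg f E v : ℤ) - (blueDeg f E v : ℤ)) 0
  else ((Finset.univ.filter (fun u => f u = true ∧ s(u, v) ∈ avail f E)).card : ℤ)
    + (blueDeg f E v : ℤ) - (redDeg f E v : ℤ)

/-! Complement `S` on the blue-blue edges and keep it on the red-blue ones. The degree conditions on
`S` bound the degree of every node `v` in the resulting edge set by `b'(v)`, so this set is a
`b'`-matching. The claim is then Edmonds' blossom inequality: in the sum of the degrees over `X`,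
an edge inside `X` counts twice and an edge of `F` at least once, so twice the number of edges
exceeds this sum by at most `|F|`; halve and round down. -/

section Blossom

variable [DecidableEq V] {M F : Finset (Sym2 V)} {X : Finset V}

theorem two_le_card_filter_mem {e : Sym2 V} (he : ¬ e.IsDiag) (heX : ∀ v ∈ e, v ∈ X) :
    2 ≤ #{v ∈ X | v ∈ e} := by
  rw [← Sym2.card_toFinset_of_not_isDiag e he]
  refine card_le_card fun v hv => ?_
  rw [Sym2.mem_toFinset] at hv
  exact mem_filter.2 ⟨heX v hv, hv⟩

theorem two_mul_card_le_sum_degree_add_card (hM : Loopless M)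
    (hMX : ∀ e ∈ M, (∀ v ∈ e, v ∈ X) ∨ e ∈ F ∧ ∃ v ∈ X, v ∈ e) :
    2 * #M ≤ ∑ v ∈ X, #{e ∈ M | v ∈ e} + #F := by
  have two_le : ∀ e ∈ M, 2 ≤ #{v ∈ X | v ∈ e} + if e ∈ F then 1 else 0 := by
    intro e he
    rcases hMX e he with heX | ⟨heF, v, hvX, hve⟩
    · exact le_add_right (two_le_card_filter_mem (hM e he) heX)
    · rw [if_pos heF]
      exact Nat.succ_le_succ (card_pos.2 ⟨v, mem_filter.2 ⟨hvX, hve⟩⟩)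
  have double_count : ∑ e ∈ M, #{v ∈ X | v ∈ e} = ∑ v ∈ X, #{e ∈ M | v ∈ e} :=
    sum_card_bipartiteAbove_eq_sum_card_bipartiteBelow fun e v => v ∈ e
  calc 2 * #M = ∑ _e ∈ M, 2 := by rw [sum_const, smul_eq_mul, mul_comm]
    _ ≤ ∑ e ∈ M, (#{v ∈ X | v ∈ e} + if e ∈ F then 1 else 0) := sum_le_sum two_le
    _ = ∑ v ∈ X, #{e ∈ M | v ∈ e} + #{e ∈ M | e ∈ F} := by
      rw [sum_add_distrib, double_count, card_filter (· ∈ F)]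
    _ ≤ ∑ v ∈ X, #{e ∈ M | v ∈ e} + #F := by
      gcongr
      exact fun e he => (mem_filter.1 he).2

theorem card_le_blossom_bound {b : V → ℤ} (hM : Loopless M)
    (hMX : ∀ e ∈ M, (∀ v ∈ e, v ∈ X) ∨ e ∈ F ∧ ∃ v ∈ X, v ∈ e)
    (hb : ∀ v ∈ X, (#{e ∈ M | v ∈ e} : ℤ) ≤ b v) :
    (#M : ℤ) ≤ Int.fdiv (∑ v ∈ X, b v + #F) 2 := by
  rw [Int.fdiv_eq_ediv_of_nonneg _ zero_le_two, Int.le_ediv_iff_mul_le two_pos]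
  calc (#M : ℤ) * 2 ≤ ∑ v ∈ X, (#{e ∈ M | v ∈ e} : ℤ) + #F := by
        rw [mul_comm]
        exact_mod_cast two_mul_card_le_sum_degree_add_card hM hMX
    _ ≤ ∑ v ∈ X, b v + #F := by
        gcongr with v hv
        exact hb v hv

end Blossom

theorem avail_loopless [Fintype V] [DecidableEq V] (f : V → Bool) (E : Finset (Sym2 V)) :
    Loopless (avail f E) :=
  fun _ he => (mem_filter.1 he).2.1

theorem card_incident_eq_card_neighbors [Fintype V] [DecidableEq V] (M : Finset (Sym2 V)) (v : V) :
    #{e ∈ M | v ∈ e} = #{u : V | s(u, v) ∈ M} := by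
  have incident_eq_image : {e ∈ M | v ∈ e} = image (fun u => s(u, v)) {u | s(u, v) ∈ M} := by
    ext e
    simp only [mem_filter, mem_image, mem_univ, true_and]
    constructor
    · rintro ⟨he, hve⟩
      obtain ⟨u, rfl⟩ := Sym2.mem_iff_exists.1 hve
      exact ⟨u, Sym2.eq_swap ▸ he, Sym2.eq_swap⟩
    · rintro ⟨u, hu, rfl⟩
      exact ⟨hu, Sym2.mem_mk_right u v⟩
  rw [incident_eq_image, card_image_of_injective _ fun _ _ => Sym2.congr_left.1]

section BlueSwitch

variable [Fintype V] [DecidableEq V] {f : V → Bool} {A S Y : Finset (Sym2 V)} {v : V}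

/-- The edges of `Y` selected after complementing `S` on the blue-blue edges: the blue-blue edges
outside `S` and the red-blue edges in `S`. Red-red edges are discarded. -/
def blueSwitch (f : V → Bool) (S Y : Finset (Sym2 V)) : Finset (Sym2 V) :=
  {e ∈ Y | (∀ v ∈ e, f v = true) ∧ e ∉ S} ∪
    {e ∈ Y | (∃ u v : V, e = s(u, v) ∧ f u = false ∧ f v = true) ∧ e ∈ S}

theorem blueSwitch_subset : blueSwitch f S Y ⊆ Y :=
  union_subset (filter_subset _ _) (filter_subset _ _)

theorem card_blueSwitch :
    #(blueSwitch f S Y) = #{e ∈ Y | (∀ v ∈ e, f v = true) ∧ e ∉ S} +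
      #{e ∈ Y | (∃ u v : V, e = s(u, v) ∧ f u = false ∧ f v = true) ∧ e ∈ S} :=
  card_union_of_disjoint <| disjoint_filter.2 fun _ _ blue mixed => blue.2 mixed.2

theorem mem_of_mem_blueSwitch_of_red {e : Sym2 V} (he : e ∈ blueSwitch f S Y) (hve : v ∈ e)
    (hv : f v = false) : e ∈ S := by
  rcases mem_union.1 he with blue | mixed
  · exact absurd ((mem_filter.1 blue).2.1 v hve) (by simp [hv])
  · exact (mem_filter.1 mixed).2.2

theorem degree_blueSwitch_le_of_red (hv : f v = false) :
    #{e ∈ blueSwitch f S Y | v ∈ e} ≤ #{e ∈ S | v ∈ e} := by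
  refine card_le_card fun e he => ?_
  obtain ⟨he, hve⟩ := mem_filter.1 he
  exact mem_filter.2 ⟨mem_of_mem_blueSwitch_of_red he hve hv, hve⟩

theorem neighbor_of_mem_blueSwitch_of_blue {u : V} (hYA : Y ⊆ A) (hv : f v = true)
    (huv : s(u, v) ∈ blueSwitch f S Y) :
    (f u = true ∧ s(u, v) ∈ A ∧ s(u, v) ∉ S) ∨ (f u = false ∧ s(u, v) ∈ A ∧ s(u, v) ∈ S) := by
  have huvA := hYA (blueSwitch_subset huv)
  rcases mem_union.1 huv with blue | mixed
  · obtain ⟨-, all_blue, huvS⟩ := mem_filter.1 blue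
    exact .inl ⟨all_blue u (Sym2.mem_mk_left u v), huvA, huvS⟩
  · obtain ⟨-, ⟨x, y, hxy, hx, -⟩, huvS⟩ := mem_filter.1 mixed
    have hu : f u = false := by
      rcases Sym2.eq_iff.1 hxy with ⟨rfl, -⟩ | ⟨-, rfl⟩
      · exact hx
      · exact absurd hv (by simp [hx])
    exact .inr ⟨hu, huvA, huvS⟩

theorem degree_blueSwitch_le_of_blue (hYA : Y ⊆ A) (hv : f v = true) :
    #{e ∈ blueSwitch f S Y | v ∈ e} ≤ #{u | f u = true ∧ s(u, v) ∈ A ∧ s(u, v) ∉ S} +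
      #{u | f u = false ∧ s(u, v) ∈ A ∧ s(u, v) ∈ S} := by
  rw [card_incident_eq_card_neighbors]
  refine (card_le_card fun u hu => ?_).trans (card_union_le _ _)
  rw [← filter_or]
  exact mem_filter.2
    ⟨mem_univ u, neighbor_of_mem_blueSwitch_of_blue hYA hv (mem_filter.1 hu).2⟩

end BlueSwitch

theorem stmt11_general [Fintype V] [DecidableEq V] (f : V → Bool) {A : Finset (Sym2 V)}
    (hA : Loopless A) (S : Finset (Sym2 V)) (b : V → ℤ) (X : Finset V)
    (hred : ∀ v ∈ X, f v = false → (#{e ∈ S | v ∈ e} : ℤ) ≤ b v)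
    (hblue : ∀ v ∈ X, f v = true →
      (#{u | f u = true ∧ s(u, v) ∈ A ∧ s(u, v) ∉ S} : ℤ) +
        #{u | f u = false ∧ s(u, v) ∈ A ∧ s(u, v) ∈ S} ≤ b v)
    (F : Finset (Sym2 V)) (hFA : F ⊆ A) (hFX : ∀ e ∈ F, ∃ v ∈ X, v ∈ e) :
    (#{e ∈ {e ∈ A | ∀ v ∈ e, v ∈ X} ∪ F | (∀ v ∈ e, f v = true) ∧ e ∉ S} : ℤ) +
        #{e ∈ {e ∈ A | ∀ v ∈ e, v ∈ X} ∪ F |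
          (∃ u v : V, e = s(u, v) ∧ f u = false ∧ f v = true) ∧ e ∈ S} ≤
      Int.fdiv (∑ v ∈ X, b v + #F) 2 := by
  have hYA : {e ∈ A | ∀ v ∈ e, v ∈ X} ∪ F ⊆ A := union_subset (filter_subset _ _) hFA
  rw [← Nat.cast_add, ← card_blueSwitch]
  refine card_le_blossom_bound (fun e he => hA e (hYA (blueSwitch_subset he)))
    (fun e he => ?_) (fun v hv => ?_)
  · rcases mem_union.1 (blueSwitch_subset he) with inside | heF
    · exact .inl (mem_filter.1 inside).2
    · exact .inr ⟨heF, hFX e heF⟩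
  · cases hfv : f v with
    | false => exact (Nat.cast_le.2 (degree_blueSwitch_le_of_red hfv)).trans (hred v hv hfv)
    | true =>
      refine le_trans ?_ (hblue v hv hfv)
      exact_mod_cast degree_blueSwitch_le_of_blue hYA hfv

/-- Validity of the added constraints of (IP-1b): any integral solution `S` of (IP-1a)
satisfies, for all `X ⊆ V` and all `F ⊆ δ_{E*}(X)`, the blossom-type inequality. -/
theorem stmt11 [Fintype V] [DecidableEq V] (f : V → Bool) (E : Finset (Sym2 V))
    (hE : Loopless E) (S : Finset (Sym2 V))
    (hS : S ⊆ avail f E)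
    (hred : ∀ v : V, f v = false →
      ((S.filter (fun e => v ∈ e)).card : ℤ) = bPrime f E v)
    (hblue : ∀ v : V, f v = true →
      ((Finset.univ.filter (fun u => f u = true ∧ s(u, v) ∈ avail f E ∧ s(u, v) ∉ S)).card : ℤ)
        + ((Finset.univ.filter
            (fun u => f u = false ∧ s(u, v) ∈ avail f E ∧ s(u, v) ∈ S)).card : ℤ)
        ≤ bPrime f E v) :
    ∀ X : Finset V, ∀ F : Finset (Sym2 V), F ⊆ avail f E →
      (∀ e ∈ F, ∃ u v : V, e = s(u, v) ∧ u ∈ X ∧ v ∉ X) →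
      (((((avail f E).filter (fun e => ∀ v ∈ e, v ∈ X)) ∪ F).filter
          (fun e => (∀ v ∈ e, f v = true) ∧ e ∉ S)).card : ℤ)
        + (((((avail f E).filter (fun e => ∀ v ∈ e, v ∈ X)) ∪ F).filter
            (fun e => (∃ u v : V, e = s(u, v) ∧ f u = false ∧ f v = true) ∧ e ∈ S)).card : ℤ)
        ≤ Int.fdiv ((∑ v ∈ X, bPrime f E v) + (F.card : ℤ)) 2 := by
  intro X F hF hFX
  exact stmt11_general f (avail_loopless f E) S (bPrime f E) X (fun v _ hv => (hred v hv).le)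
    (fun v _ => hblue v) F hF fun e he =>
      let ⟨u, v, he_eq, hu, _⟩ := hFX e he; ⟨u, hu, he_eq ▸ Sym2.mem_mk_left u v⟩
end

section
/- Let G = (V, E) be a two-coloured graph in which the blue nodes form a clique (every two distinct blue nodes are adjacent) and there are strictly more blue nodes than red nodes. Then no blue node is under majority illusion in G. -/
open Finset

variable {V : Type*}

section

variable [Fintype V] [DecidableEq V] (f : V → Bool) (E : Finset (Sym2 V)) (v : V)

theorem redDeg_le_card_red : redDeg f E v ≤ #{u | f u = false} :=
  card_le_card <| monotone_filter_right _ fun _ _ hu ↦ hu.2.2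

variable {f E v}

theorem card_blue_le_blueDeg_add_one (hadj : ∀ u, f u = true → u ≠ v → s(u, v) ∈ E) :
    #{u | f u = true} ≤ blueDeg f E v + 1 := by
  have erase_subset_blueNeighbors :
      ({u | f u = true} : Finset V).erase v ⊆
        ({u | u ≠ v ∧ s(u, v) ∈ E ∧ f u = true} : Finset V) := by
    intro u hu
    obtain ⟨hne, hblue⟩ : u ≠ v ∧ f u = true := by simpa using hu
    simpa using ⟨hne, hadj u hblue hne, hblue⟩
  calc #{u | f u = true}
      ≤ #(({u | f u = true} : Finset V).erase v) + 1 :=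
        Nat.sub_le_iff_le_add.mp pred_card_le_card_erase
    _ ≤ blueDeg f E v + 1 := Nat.add_le_add_right (card_le_card erase_subset_blueNeighbors) 1

theorem stmt12_general (hadj : ∀ u, f u = true → u ≠ v → s(u, v) ∈ E)
    (hmaj : #{u | f u = false} < #{u | f u = true}) : redDeg f E v ≤ blueDeg f E v :=
  Nat.le_of_lt_succ <|
    ((redDeg_le_card_red f E v).trans_lt hmaj).trans_le (card_blue_le_blueDeg_add_one hadj)

end

/-- If the blue nodes form a clique and blue is the strict majority, no blue node is
under majority illusion. -/
theorem stmt12 [Fintype V] [DecidableEq V] (f : V → Bool) (E : Finset (Sym2 V))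
    (hE : Loopless E)
    (hclique : ∀ u v : V, f u = true → f v = true → u ≠ v → s(u, v) ∈ E)
    (hmaj : (Finset.univ.filter (fun v => f v = false)).card <
      (Finset.univ.filter (fun v => f v = true)).card) :
    ∀ v : V, f v = true → redDeg f E v ≤ blueDeg f E v :=
  fun v hv ↦ stmt12_general (fun u hu ↦ hclique u v hu hv) hmaj
end

section
/- Let a and l be coprime positive integers with a < l, let C and W be finite index sets with |C| = n, and let x_b, x_r : C -> ℕ and y_b, y_r : W -> ℕ be functions satisfying: (i) x_b(c) + ⌊a·x_r(c)/l⌋ = 1 for every c ∈ C; (ii) Σ_{c ∈ C} x_b(c) = Σ_{w ∈ W} ( y_r(w) + ⌊l·y_b(w)/a⌋ ); and (iii) Σ_{c ∈ C} (x_r(c) + x_b(c)) + Σ_{w ∈ W} (y_r(w) + y_b(w)) ≤ n·(a + l)/l, where the inequality (iii) is over the rationals. Then x_r(c) = 0 and x_b(c) = 1 for every c ∈ C, y_r(w) = 0 for every w ∈ W, a divides y_b(w) for every w ∈ W, and Σ_{w ∈ W} y_b(w) = n·a/l. -/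
open Finset

/-!
Charge `l` for every alteration, so that (iii) says that the total charge is at most `n * (a + l)`.
If a clause node also pays `a` for each blue neighbour it gains, it pays at least `a + l`, with
equality only for one added blue neighbour and nothing else. By (ii) the extra payments are at most
`a` times the right-hand side of (ii), whose term at each variable node `w` is at most `l / a`
times the number of alterations at `w`. So all these estimates are equalities, and the equality
cases give the conclusion.
-/

section EqualityFromSums

variable {ι κ M : Type*} [AddCommMonoid M] [PartialOrder M] [IsOrderedCancelAddMonoid M]
  {s : Finset ι} {t : Finset κ} {f f' : ι → M} {g g' : κ → M}

theorem forall_eq_and_forall_eq_of_sum_add_sum_le (hf : ∀ i ∈ s, f i ≤ f' i)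
    (hg : ∀ j ∈ t, g j ≤ g' j)
    (h : ∑ i ∈ s, f' i + ∑ j ∈ t, g' j ≤ ∑ i ∈ s, f i + ∑ j ∈ t, g j) :
    (∀ i ∈ s, f i = f' i) ∧ ∀ j ∈ t, g j = g' j := by
  have hs := sum_le_sum hf
  have ht := sum_le_sum hg
  obtain ⟨es, et⟩ := (add_eq_add_iff_eq_and_eq hs ht).1 (le_antisymm (add_le_add hs ht) h)
  exact ⟨(sum_eq_sum_iff_of_le hf).1 es, (sum_eq_sum_iff_of_le hg).1 et⟩

end EqualityFromSums

section LocalEstimates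

variable {a l : ℕ}

theorem one_lt_of_mul_div_pos {x : ℕ} (hal : a < l) (h : 0 < a * x / l) : 1 < x := by
  by_contra! hx
  have : a * x < l := (mul_le_of_le_one_right' hx).trans_lt hal
  exact h.ne' (Nat.div_eq_of_lt this)

/-- The charge of a clause node to which `b` blue neighbours are added and from which `r` red
neighbours are removed: `l` for each alteration and a further `a` for each added blue neighbour. -/
def clauseCharge (a l b r : ℕ) : ℕ := l * (r + b) + a * b

theorem add_lt_clauseCharge {b r : ℕ} (hal : a < l) (h : 1 ≤ b + a * r / l)
    (hne : ¬(r = 0 ∧ b = 1)) : a + l < clauseCharge a l b r := by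
  unfold clauseCharge
  rcases Nat.eq_zero_or_pos b with rfl | hb
  · have hr : 1 < r := one_lt_of_mul_div_pos hal (h.trans_eq (zero_add _))
    calc a + l < l * 2 := by omega
      _ ≤ l * (r + 0) + a * 0 := by simpa using Nat.mul_le_mul_left l hr
  · have hrb : 2 ≤ r + b := by omega
    calc a + l < l * 2 + a * 1 := by omega
      _ ≤ l * (r + b) + a * b := by gcongr; exact hb

theorem add_le_clauseCharge {b r : ℕ} (hal : a < l) (h : 1 ≤ b + a * r / l) :
    a + l ≤ clauseCharge a l b r := by
  by_cases hrb : r = 0 ∧ b = 1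
  · obtain ⟨rfl, rfl⟩ := hrb
    simp [clauseCharge, add_comm]
  · exact (add_lt_clauseCharge hal h hrb).le

theorem mul_add_mul_div_le (hal : a ≤ l) (r b : ℕ) :
    a * (r + l * b / a) ≤ l * (r + b) := by
  rw [mul_add, mul_add]
  exact add_le_add (Nat.mul_le_mul_right r hal) (Nat.mul_div_le _ _)

theorem eq_zero_and_dvd_of_mul_add_mul_div_eq {r b : ℕ} (hal : a < l)
    (h : a * (r + l * b / a) = l * (r + b)) : r = 0 ∧ a ∣ l * b := by
  rw [mul_add, mul_add] at h
  obtain ⟨hr, hb⟩ := (add_eq_add_iff_eq_and_eq (Nat.mul_le_mul_right r hal.le)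
    (Nat.mul_div_le (l * b) a)).1 h
  exact ⟨(mul_eq_mul_right_iff.1 hr).resolve_left hal.ne, Dvd.intro _ hb⟩

end LocalEstimates

section GlobalBalance

variable {α β : Type*} {a l : ℕ} {C : Finset α} {W : Finset β} {xb xr : α → ℕ} {yb yr : β → ℕ}

theorem forall_clauseCharge_eq_and_forall_mul_eq (hal : a < l)
    (demand : ∀ c ∈ C, 1 ≤ xb c + a * xr c / l)
    (supply : ∑ c ∈ C, xb c ≤ ∑ w ∈ W, (yr w + l * yb w / a))
    (budget : l * (∑ c ∈ C, (xr c + xb c) + ∑ w ∈ W, (yr w + yb w)) ≤ #C * (a + l)) :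
    (∀ c ∈ C, a + l = clauseCharge a l (xb c) (xr c)) ∧
      ∀ w ∈ W, a * (yr w + l * yb w / a) = l * (yr w + yb w) := by
  refine forall_eq_and_forall_eq_of_sum_add_sum_le
    (fun c hc ↦ add_le_clauseCharge hal (demand c hc))
    (fun w _ ↦ mul_add_mul_div_le hal.le (yr w) (yb w)) ?_
  calc ∑ c ∈ C, clauseCharge a l (xb c) (xr c) + ∑ w ∈ W, l * (yr w + yb w)
      = l * (∑ c ∈ C, (xr c + xb c) + ∑ w ∈ W, (yr w + yb w)) + a * ∑ c ∈ C, xb c := by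
        simp only [clauseCharge, sum_add_distrib, ← mul_sum]
        ring
    _ ≤ #C * (a + l) + a * ∑ w ∈ W, (yr w + l * yb w / a) := by gcongr
    _ = ∑ _c ∈ C, (a + l) + ∑ w ∈ W, a * (yr w + l * yb w / a) := by
        rw [sum_const, smul_eq_mul, mul_sum]

theorem mul_sum_eq_card_mul (hal : a ≤ l)
    (hxb : ∀ c ∈ C, xb c = 1) (hyr : ∀ w ∈ W, yr w = 0)
    (supply : ∑ c ∈ C, xb c ≤ ∑ w ∈ W, (yr w + l * yb w / a))
    (budget : l * (∑ c ∈ C, (xr c + xb c) + ∑ w ∈ W, (yr w + yb w)) ≤ #C * (a + l)) :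
    l * ∑ w ∈ W, yb w = #C * a := by
  have blue_sum : ∑ c ∈ C, xb c = #C := by
    rw [card_eq_sum_ones]
    exact sum_congr rfl hxb
  have variable_sum : ∑ w ∈ W, (yr w + yb w) = ∑ w ∈ W, yb w :=
    sum_congr rfl fun w hw ↦ by rw [hyr w hw, zero_add]
  have supply_le : a * ∑ w ∈ W, (yr w + l * yb w / a) ≤ l * ∑ w ∈ W, yb w := by
    rw [← variable_sum, mul_sum, mul_sum]
    exact sum_le_sum fun w _ ↦ mul_add_mul_div_le hal (yr w) (yb w)
  apply le_antisymm
  · rw [sum_add_distrib, blue_sum, variable_sum] at budget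
    linarith [Nat.zero_le (l * ∑ c ∈ C, xr c)]
  · calc #C * a = a * ∑ c ∈ C, xb c := by rw [blue_sum, mul_comm]
      _ ≤ a * ∑ w ∈ W, (yr w + l * yb w / a) := Nat.mul_le_mul_left a supply
      _ ≤ l * ∑ w ∈ W, yb w := supply_le

end GlobalBalance

theorem stmt18_general {α β : Type*} {a l : ℕ} (ha : 0 < a) (hal : a < l) (hco : Nat.Coprime a l)
    {C : Finset α} {W : Finset β} {xb xr : α → ℕ} {yb yr : β → ℕ}
    (h1 : ∀ c ∈ C, 1 ≤ xb c + a * xr c / l)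
    (h2 : ∑ c ∈ C, xb c ≤ ∑ w ∈ W, (yr w + l * yb w / a))
    (h3 : ((∑ c ∈ C, (xr c + xb c) : ℕ) : ℚ) + ((∑ w ∈ W, (yr w + yb w) : ℕ) : ℚ)
      ≤ (#C : ℚ) * ((a : ℚ) + (l : ℚ)) / (l : ℚ)) :
    (∀ c ∈ C, xr c = 0 ∧ xb c = 1) ∧
    (∀ w ∈ W, yr w = 0) ∧
    (∀ w ∈ W, a ∣ yb w) ∧
    ((∑ w ∈ W, yb w : ℕ) : ℚ) = (#C : ℚ) * (a : ℚ) / (l : ℚ) := by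
  have hl : (0 : ℚ) < l := mod_cast ha.trans hal
  have budget : l * (∑ c ∈ C, (xr c + xb c) + ∑ w ∈ W, (yr w + yb w)) ≤ #C * (a + l) :=
    mod_cast (le_div_iff₀' hl).1 h3
  obtain ⟨clause_eq, variable_eq⟩ := forall_clauseCharge_eq_and_forall_mul_eq hal h1 h2 budget
  have hx : ∀ c ∈ C, xr c = 0 ∧ xb c = 1 := fun c hc ↦ by
    by_contra hne
    exact (add_lt_clauseCharge hal (h1 c hc) hne).ne (clause_eq c hc)
  have hy : ∀ w ∈ W, yr w = 0 ∧ a ∣ l * yb w := fun w hw ↦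
    eq_zero_and_dvd_of_mul_add_mul_div_eq hal (variable_eq w hw)
  have hyr : ∀ w ∈ W, yr w = 0 := fun w hw ↦ (hy w hw).1
  have total : l * ∑ w ∈ W, yb w = #C * a :=
    mul_sum_eq_card_mul hal.le (fun c hc ↦ (hx c hc).2) hyr h2 budget
  refine ⟨hx, hyr, fun w hw ↦ hco.dvd_of_dvd_mul_left (hy w hw).2, ?_⟩
  rw [eq_div_iff hl.ne', mul_comm]
  exact_mod_cast total

/-- The arithmetic core of the NP-hardness reduction: the counting identities force the
edge alterations to encode an exact satisfying assignment. Here `m / k` on ℕ is floor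
division. -/
theorem stmt18 {α β : Type*} [DecidableEq α] [DecidableEq β]
    (a l n : ℕ) (ha : 0 < a) (hl : 0 < l) (hal : a < l) (hco : Nat.Coprime a l)
    (C : Finset α) (W : Finset β) (hC : C.card = n)
    (xb xr : α → ℕ) (yb yr : β → ℕ)
    (h1 : ∀ c ∈ C, xb c + (a * xr c) / l = 1)
    (h2 : ∑ c ∈ C, xb c = ∑ w ∈ W, (yr w + (l * yb w) / a))
    (h3 : ((∑ c ∈ C, (xr c + xb c) : ℕ) : ℚ) + ((∑ w ∈ W, (yr w + yb w) : ℕ) : ℚ)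
      ≤ (n : ℚ) * ((a : ℚ) + (l : ℚ)) / (l : ℚ)) :
    (∀ c ∈ C, xr c = 0 ∧ xb c = 1) ∧
    (∀ w ∈ W, yr w = 0) ∧
    (∀ w ∈ W, a ∣ yb w) ∧
    ((∑ w ∈ W, yb w : ℕ) : ℚ) = (n : ℚ) * (a : ℚ) / (l : ℚ) := by
  subst hC
  exact stmt18_general ha hal hco (fun c hc ↦ (h1 c hc).ge) h2.le h3
end
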